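/- The size of the greedy Canny–Emiris matrix for multihomogeneous systems is given by binomial coefficients: let S be the set of integer tuples λ = (λ_{j,l}) with 0 ≤ λ_{j,l} < Σ_{i=0}^{n} d_{i,l} for all (j,l), with λ_{j,l} > λ_{j+1,l} for all l and all j < n_l (strictly decreasing within each group), and whose type function φ_λ satisfies #φ_λ^{−1}({0,…,I}) ≤ I + 1 for every I < n. Then #S = Σ_φ Π_{l=1}^{s} Π_{k=0}^{n} C(d_{k,l}, n̄_{k,l,φ}), where the sum runs over all functions φ from the grouped index set {(j,l) : 1 ≤ j ≤ n_l, 1 ≤ l ≤ s} to {0,…,n} that are weakly decreasing in j within each group and satisfy #φ^{−1}({0,…,I}) ≤ I + 1 for every I < n, where n̄_{k,l,φ} = #{j ∈ {1,…,n_l} : φ(j,l) = k} and C(d, r) denotes the binomial coefficient (which is 0 when r > d). -/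

import Mathlib

/-!
Tuples are counted type by type. A tuple `lam` has type `φ` exactly when
`lam p` lies in the block `[D_{φ p}, D_{φ p + 1})` for every `p`, where `D_i = Σ_{k<i} d_{k,l}`
(`typeOfM_eq_iff`). As distinct blocks are ordered by their index, a strictly decreasing tuple has a
weakly decreasing type; conversely, once `φ` is weakly decreasing, a tuple of type `φ` is strictly
decreasing in the group `l` as soon as it is so on each set `{j | φ (j, l) = k}`. Tuples of type `φ`
are therefore families, indexed by `(l, k)`, of strictly decreasing maps from a set of size
`#{j | φ (j, l) = k}` to a block of size `d_{k,l}` (`card_fiber`). A strictly decreasing map is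
determined by its image, an arbitrary subset of the right size, so each `(l, k)` contributes
a binomial coefficient (`card_strictAnti`).
-/

open Finset

/-- The type function of a tuple `λ` in the multihomogeneous setting: `typeOfM d lam p`
is the unique `i` with `Σ_{k=0}^{i-1} d_{k,l} ≤ λ_p < Σ_{k=0}^{i} d_{k,l}` where `l = p.1`
(defined as the least `i` with `λ_p < Σ_{k=0}^{i} d_{k,l}`). -/
noncomputable def typeOfM {s : ℕ} {nl : Fin s → ℕ} (d : ℕ → Fin s → ℕ)
    (lam : ((l : Fin s) × Fin (nl l)) → ℤ) (p : (l : Fin s) × Fin (nl l)) : ℕ :=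
  sInf {i : ℕ | lam p < ∑ k ∈ Finset.range (i + 1), (d k p.1 : ℤ)}

/-- Partial sums of the degrees of the group `l`: the left endpoint of the `i`-th block. -/
def blockStart {s : ℕ} (d : ℕ → Fin s → ℕ) (l : Fin s) (i : ℕ) : ℤ :=
  ∑ k ∈ Finset.range i, (d k l : ℤ)

lemma blockStart_mono {s : ℕ} (d : ℕ → Fin s → ℕ) (l : Fin s) : Monotone (blockStart d l) := by
  refine monotone_nat_of_le_succ fun i => ?_
  simp [blockStart, Finset.sum_range_succ]

lemma typeOfM_eq_iff {s : ℕ} {nl : Fin s → ℕ} (d : ℕ → Fin s → ℕ)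
    (lam : ((l : Fin s) × Fin (nl l)) → ℤ) (p : (l : Fin s) × Fin (nl l)) (n i : ℕ)
    (h0 : 0 ≤ lam p) (h1 : lam p < blockStart d p.1 (n + 1)) :
    typeOfM d lam p = i ↔ blockStart d p.1 i ≤ lam p ∧ lam p < blockStart d p.1 (i + 1) := by
  have hne : {i : ℕ | lam p < blockStart d p.1 (i + 1)}.Nonempty := ⟨n, h1⟩
  change sInf {i : ℕ | lam p < blockStart d p.1 (i + 1)} = i ↔ _
  constructor
  · rintro rfl
    refine ⟨?_, Nat.sInf_mem hne⟩
    rcases h : sInf {i : ℕ | lam p < blockStart d p.1 (i + 1)} with _ | k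
    · simpa [blockStart] using h0
    · have : k ∉ {i : ℕ | lam p < blockStart d p.1 (i + 1)} :=
        Nat.notMem_of_lt_sInf (by omega)
      simpa using this
  · rintro ⟨ha, hb⟩
    refine le_antisymm (Nat.sInf_le hb) (le_csInf hne fun k hk => ?_)
    by_contra! hlt
    have := blockStart_mono d p.1 (show k + 1 ≤ i from hlt)
    have hk' : lam p < blockStart d p.1 (k + 1) := hk
    omega

open scoped Classical in
/-- Strictly decreasing maps into a finite set `A` correspond to their images, which are the
subsets of `A` of the size of the domain. -/
lemma card_strictAnti {α : Type*} [Fintype α] [LinearOrder α] [DecidableEq α] (A : Finset ℤ) :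
    ((Fintype.piFinset fun _ : α => A).filter fun f => StrictAnti f).card =
      A.card.choose (Fintype.card α) := by
  rw [← Finset.card_powersetCard]
  refine Finset.card_bij (fun f _ => Finset.univ.image f) ?_ ?_ ?_
  · intro f hf
    simp only [Finset.mem_filter, Fintype.mem_piFinset] at hf
    rw [Finset.mem_powersetCard]
    refine ⟨?_, ?_⟩
    · intro x hx
      obtain ⟨a, -, rfl⟩ := Finset.mem_image.1 hx
      exact hf.1 a
    · rw [Finset.card_image_of_injective _ hf.2.injective, Finset.card_univ]
  · intro f hf g hg h
    simp only [Finset.mem_filter] at hf hg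
    have hr : Set.range f = Set.range g := by
      have := congrArg (fun t : Finset ℤ => (t : Set ℤ)) h
      simpa using this
    have hf' : StrictMono (fun x : αᵒᵈ => f (OrderDual.ofDual x)) := fun a b hab => hf.2 hab
    have hg' : StrictMono (fun x : αᵒᵈ => g (OrderDual.ofDual x)) := fun a b hab => hg.2 hab
    exact (StrictMono.range_inj hf' hg').1 hr
  · intro T hT
    rw [Finset.mem_powersetCard] at hT
    let e : Fin (Fintype.card α) ≃o αᵒᵈ :=
      Fintype.orderIsoFinOfCardEq αᵒᵈ (Fintype.card_congr OrderDual.ofDual)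
    let g : Fin (Fintype.card α) ≃o T := T.orderIsoOfFin hT.2
    refine ⟨fun a => (g (e.symm (OrderDual.toDual a)) : ℤ), ?_, ?_⟩
    · simp only [Finset.mem_filter, Fintype.mem_piFinset]
      refine ⟨fun a => hT.1 (g _).2, fun a b hab => ?_⟩
      have : e.symm (OrderDual.toDual b) < e.symm (OrderDual.toDual a) :=
        e.symm.strictMono (OrderDual.toDual_lt_toDual.2 hab)
      exact g.strictMono this
    · ext x
      simp only [Finset.mem_image, Finset.mem_univ, true_and]
      constructor
      · rintro ⟨a, rfl⟩
        exact (g _).2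
      · intro hx
        refine ⟨OrderDual.ofDual (e (g.symm ⟨x, hx⟩)), ?_⟩
        simp

open scoped Classical in
/-- For a weakly decreasing `φ`, the number of groupwise strictly decreasing tuples
whose entry at each `p` lies in the block of index `φ p`. -/
lemma card_fiber {s : ℕ} {nl : Fin s → ℕ} (n : ℕ) (d : ℕ → Fin s → ℕ)
    (φ : ((l : Fin s) × Fin (nl l)) → Fin (n + 1))
    (hφ : ∀ (l : Fin s) (j j' : Fin (nl l)), j ≤ j' → φ ⟨l, j'⟩ ≤ φ ⟨l, j⟩) :
    ((Fintype.piFinset fun p : (l : Fin s) × Fin (nl l) =>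
        Finset.Ico (blockStart d p.1 (φ p)) (blockStart d p.1 (φ p + 1))).filter fun lam =>
      ∀ (l : Fin s) (j j' : Fin (nl l)), j < j' → lam ⟨l, j'⟩ < lam ⟨l, j⟩).card =
    ∏ l : Fin s, ∏ k ∈ Finset.range (n + 1),
      Nat.choose (d k l)
        ((Finset.univ.filter fun j : Fin (nl l) => (φ ⟨l, j⟩ : ℕ) = k).card) := by
  have key : ∀ q : Fin s × Fin (n + 1),
      Nat.choose (d q.2 q.1)
        ((Finset.univ.filter fun j : Fin (nl q.1) => (φ ⟨q.1, j⟩ : ℕ) = q.2).card) =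
      ((Fintype.piFinset fun _ : {j : Fin (nl q.1) // φ ⟨q.1, j⟩ = q.2} =>
        Finset.Ico (blockStart d q.1 q.2) (blockStart d q.1 (q.2 + 1))).filter
          fun f => StrictAnti f).card := by
    intro q
    rw [card_strictAnti, Int.card_Ico, Fintype.card_subtype]
    congr 1
    · simp [blockStart, Finset.sum_range_succ]
    · simp only [Fin.ext_iff]
  simp_rw [Finset.prod_range]
  rw [← Fintype.prod_prod_type' (fun (l : Fin s) (k : Fin (n + 1)) => Nat.choose (d k l)
        ((Finset.univ.filter fun j : Fin (nl l) => (φ ⟨l, j⟩ : ℕ) = k).card)),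
    Finset.prod_congr rfl fun q _ => key q, ← Fintype.card_piFinset]
  refine Finset.card_bij' (fun lam _ q j => lam ⟨q.1, j.1⟩)
    (fun g _ p => g (p.1, φ p) ⟨p.2, rfl⟩) ?_ ?_ ?_ ?_
  · intro lam hlam
    simp only [Finset.mem_filter, Fintype.mem_piFinset] at hlam ⊢
    refine fun q => ⟨?_, fun j j' hj => hlam.2 _ _ _ hj⟩
    rintro ⟨j, hj⟩
    have := hlam.1 ⟨q.1, j⟩
    rwa [hj] at this
  · intro g hg
    simp only [Finset.mem_filter, Fintype.mem_piFinset] at hg ⊢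
    refine ⟨fun p => (hg (p.1, φ p)).1 _, fun l j j' hj => ?_⟩
    rcases (hφ l j j' hj.le).eq_or_lt with h | h
    · -- within one block, the restriction of `g` to that block decides
      have aux : ∀ k (hk : φ ⟨l, j'⟩ = k),
          g (l, φ ⟨l, j'⟩) ⟨j', rfl⟩ = g (l, k) ⟨j', hk⟩ := by
        rintro k rfl; rfl
      rw [aux _ h]
      exact (hg (l, φ ⟨l, j⟩)).2 (show (⟨j, rfl⟩ : {i // φ ⟨l, i⟩ = φ ⟨l, j⟩}) < ⟨j', h⟩ from hj)
    · -- distinct blocks are ordered by their index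
      have h1 := Finset.mem_Ico.1 ((hg (l, φ ⟨l, j'⟩)).1 ⟨j', rfl⟩)
      have h2 := Finset.mem_Ico.1 ((hg (l, φ ⟨l, j⟩)).1 ⟨j, rfl⟩)
      have h3 := blockStart_mono d l (show (φ ⟨l, j'⟩ : ℕ) + 1 ≤ φ ⟨l, j⟩ from h)
      exact h1.2.trans_le (h3.trans h2.1)
  · intro lam _
    rfl
  · intro g _
    funext q j
    have aux : ∀ k (hk : φ ⟨q.1, j.1⟩ = k),
        g (q.1, φ ⟨q.1, j.1⟩) ⟨j.1, rfl⟩ = g (q.1, k) ⟨j.1, hk⟩ := by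
      rintro k rfl; rfl
    exact aux q.2 j.2

open scoped Classical in
/-- The size of the greedy Canny–Emiris matrix for multihomogeneous systems is given by
binomial coefficients. -/
theorem card_multihomogeneous_greedy
    (s : ℕ) (hs : 0 < s) (nl : Fin s → ℕ) (hnl : ∀ l, 0 < nl l)
    (n : ℕ) (hn : n = ∑ l, nl l)
    (d : ℕ → Fin s → ℕ) (hd : ∀ i ≤ n, ∀ l, 0 < d i l) :
    Set.ncard {lam : ((l : Fin s) × Fin (nl l)) → ℤ |
        (∀ p, 0 ≤ lam p ∧ lam p < ∑ i ∈ Finset.range (n + 1), (d i p.1 : ℤ)) ∧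
        (∀ (l : Fin s) (j j' : Fin (nl l)), j < j' → lam ⟨l, j'⟩ < lam ⟨l, j⟩) ∧
        (∀ I < n,
          (Finset.univ.filter fun p : (l : Fin s) × Fin (nl l) =>
            typeOfM d lam p ≤ I).card ≤ I + 1)} =
      ∑ φ ∈ Finset.univ.filter
          (fun φ : ((l : Fin s) × Fin (nl l)) → Fin (n + 1) =>
            (∀ (l : Fin s) (j j' : Fin (nl l)), j ≤ j' → φ ⟨l, j'⟩ ≤ φ ⟨l, j⟩) ∧
            ∀ I < n,
              (Finset.univ.filter fun p : (l : Fin s) × Fin (nl l) =>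
                (φ p : ℕ) ≤ I).card ≤ I + 1),
        ∏ l : Fin s, ∏ k ∈ Finset.range (n + 1),
          Nat.choose (d k l)
            ((Finset.univ.filter fun j : Fin (nl l) => (φ ⟨l, j⟩ : ℕ) = k).card) := by
  set S := {lam : ((l : Fin s) × Fin (nl l)) → ℤ |
        (∀ p, 0 ≤ lam p ∧ lam p < ∑ i ∈ Finset.range (n + 1), (d i p.1 : ℤ)) ∧
        (∀ (l : Fin s) (j j' : Fin (nl l)), j < j' → lam ⟨l, j'⟩ < lam ⟨l, j⟩) ∧
        (∀ I < n,
          (Finset.univ.filter fun p : (l : Fin s) × Fin (nl l) =>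
            typeOfM d lam p ≤ I).card ≤ I + 1)} with hS
  have hfin : S.Finite := by
    refine (Fintype.piFinset fun p : (l : Fin s) × Fin (nl l) =>
      Finset.Ico 0 (blockStart d p.1 (n + 1))).finite_toSet.subset fun lam h => ?_
    simp only [Finset.mem_coe, Fintype.mem_piFinset, Finset.mem_Ico]
    exact h.1
  -- the type, truncated at `n` so as to be defined on all tuples
  let τ : (((l : Fin s) × Fin (nl l)) → ℤ) → ((l : Fin s) × Fin (nl l)) → Fin (n + 1) :=
    fun lam p => ⟨min (typeOfM d lam p) n, by omega⟩
  have hτ : ∀ lam ∈ S, ∀ p, (τ lam p : ℕ) = typeOfM d lam p := by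
    intro lam h p
    exact min_eq_left (Nat.sInf_le (h.1 p).2)
  have hblock : ∀ lam ∈ S, ∀ p, blockStart d p.1 (τ lam p) ≤ lam p ∧
      lam p < blockStart d p.1 (τ lam p + 1) := by
    intro lam h p
    exact (typeOfM_eq_iff d lam p n _ (h.1 p).1 (h.1 p).2).1 (hτ lam h p).symm
  rw [Set.ncard_eq_toFinset_card S hfin,
    Finset.card_eq_sum_card_fiberwise (f := τ) (t := Finset.univ.filter
          (fun φ : ((l : Fin s) × Fin (nl l)) → Fin (n + 1) =>
            (∀ (l : Fin s) (j j' : Fin (nl l)), j ≤ j' → φ ⟨l, j'⟩ ≤ φ ⟨l, j⟩) ∧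
            ∀ I < n,
              (Finset.univ.filter fun p : (l : Fin s) × Fin (nl l) =>
                (φ p : ℕ) ≤ I).card ≤ I + 1))]
  · refine Finset.sum_congr rfl fun φ hφ => ?_
    simp only [Finset.mem_filter, Finset.mem_univ, true_and] at hφ
    rw [← card_fiber n d φ hφ.1]
    congr 1
    ext lam
    simp only [Finset.mem_filter, Set.Finite.mem_toFinset, Fintype.mem_piFinset, Finset.mem_Ico]
    constructor
    · rintro ⟨h, rfl⟩
      exact ⟨hblock lam h, h.2.1⟩
    · rintro ⟨h, hanti⟩
      have hb : ∀ p, 0 ≤ lam p ∧ lam p < blockStart d p.1 (n + 1) := fun p =>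
        ⟨le_trans (Finset.sum_nonneg fun _ _ => by positivity) (h p).1,
          (h p).2.trans_le (blockStart_mono d p.1 (by have := (φ p).2; omega))⟩
      have ht : ∀ p, typeOfM d lam p = φ p := fun p =>
        (typeOfM_eq_iff d lam p n _ (hb p).1 (hb p).2).2 (h p)
      have hmem : lam ∈ S := ⟨hb, hanti, by simpa only [ht] using hφ.2⟩
      exact ⟨hmem, funext fun p => Fin.ext ((hτ lam hmem p).trans (ht p))⟩
  · intro lam h
    replace h : lam ∈ S := by simpa using h
    simp only [Finset.coe_filter, Finset.mem_univ, true_and, Set.mem_ofPred_eq]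
    refine ⟨fun l j j' hj => ?_, by simpa only [hτ lam h] using h.2.2⟩
    rcases hj.eq_or_lt with rfl | hj
    · exact le_rfl
    by_contra! hlt
    have h1 := h.2.1 l j j' hj
    have h2 := hblock lam h ⟨l, j⟩
    have h3 := hblock lam h ⟨l, j'⟩
    have h4 := blockStart_mono d l (show (τ lam ⟨l, j⟩ : ℕ) + 1 ≤ τ lam ⟨l, j'⟩ from hlt)
    exact absurd h1 (h2.2.trans_le (h4.trans h3.1)).not_gt
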